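/- (Corollary: scenario reduction to the vertices of the polytope.) Let V and E be real vector spaces, let S = {ξ¹, …, ξ^m} be a nonempty finite subset of V, let U = convexHull ℝ S, and let T : V →ᵃ[ℝ] E be an affine map. Let d : E → E → ℝ be such that for every fixed x the function y ↦ d(x, y) is quasiconvex on all of E. Then for every x ∈ E, the worst-case recovery cost over U equals the worst-case recovery cost over the finitely many scenarios in S: sSup ((fun ξ => d(x, T ξ)) '' U) = max_{ξ ∈ S} d(x, T ξ). Consequently, the objective functions of the Rec-Eff center problem over U and over S coincide, so the finite scenario set S may be chosen in place of U without loss of generality. -/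

import Mathlib

section

variable {𝕜 E F β : Type*} [PartialOrder 𝕜]

theorem quasiconvexOn_comp_affineMap [Ring 𝕜] [AddCommGroup E] [Module 𝕜 E] [AddCommGroup F]
    [Module 𝕜 F] [LE β] {s : Set F} {f : F → β} (hf : QuasiconvexOn 𝕜 s f) (g : E →ᵃ[𝕜] F) :
    QuasiconvexOn 𝕜 (g ⁻¹' s) (f ∘ g) :=
  fun r => (hf r).affine_preimage g

theorem upperBounds_image_convexHull [Semiring 𝕜] [AddCommMonoid E] [Module 𝕜 E] [Preorder β]
    {s t : Set E} {f : E → β} (hf : QuasiconvexOn 𝕜 s f) (hts : t ⊆ s) :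
    upperBounds (f '' convexHull 𝕜 t) = upperBounds (f '' t) := by
  refine (upperBounds_mono_set (Set.image_mono (subset_convexHull 𝕜 t))).antisymm fun r hr => ?_
  have hull_subset_sublevel : convexHull 𝕜 t ⊆ {x ∈ s | f x ≤ r} :=
    convexHull_min (fun x hx => ⟨hts hx, hr (Set.mem_image_of_mem f hx)⟩) (hf r)
  rintro _ ⟨x, hx, rfl⟩
  exact (hull_subset_sublevel hx).2

end

theorem isLUB_image_finset_sup' {ι α : Type*} [SemilatticeSup α] {s : Finset ι} (hs : s.Nonempty)
    (f : ι → α) : IsLUB (f '' (s : Set ι)) (s.sup' hs f) := by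
  simp [isLUB_iff_le_iff, mem_upperBounds]

theorem recEff_center_scenario_reduction_general
    {𝕜 V E β : Type*} [Ring 𝕜] [PartialOrder 𝕜] [AddCommGroup V] [Module 𝕜 V]
    [AddCommGroup E] [Module 𝕜 E] [Preorder β]
    {S : Set V} {C : Set E} {T : V →ᵃ[𝕜] E} (hT : Set.MapsTo T S C)
    {f : E → β} (hf : QuasiconvexOn 𝕜 C f) (r : β) :
    IsLUB ((fun ζ => f (T ζ)) '' convexHull 𝕜 S) r ↔ IsLUB ((fun ζ => f (T ζ)) '' S) r :=
  isLUB_congr (upperBounds_image_convexHull (quasiconvexOn_comp_affineMap hf T) hT)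

/-- Corollary: scenario reduction to the vertices of the polytope. The worst-case
recovery cost over the polytope U = convexHull ℝ S equals the maximum over the
finitely many generating scenarios in S. -/
theorem recEff_center_scenario_reduction
    {V E : Type*} [AddCommGroup V] [Module ℝ V] [AddCommGroup E] [Module ℝ E]
    (S : Finset V) (hS : S.Nonempty)
    (T : V →ᵃ[ℝ] E)
    (d : E → E → ℝ)
    (hd : ∀ x : E, QuasiconvexOn ℝ (Set.univ : Set E) (fun y => d x y)) :
    ∀ x : E,
      sSup ((fun ζ => d x (T ζ)) '' convexHull ℝ (S : Set V))
        = S.sup' hS (fun ζ => d x (T ζ)) := by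
  intro x
  have isLUB_hull := (recEff_center_scenario_reduction_general (Set.mapsTo_univ T S) (hd x) _).2
    (isLUB_image_finset_sup' hS _)
  exact isLUB_hull.csSup_eq (hS.to_set.convexHull.image _)
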